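/- Let Γ ⊂ ℂ be a quasismooth Jordan curve. There exists ε₁ = ε₁(Γ) > 0 with the following property. Let 0 < s < diam Γ, and let z_s ∈ Γ and ζ_s ∈ Γ_{δ(s)} satisfy |z_s − ζ_s| = s = ρ_{δ(s)}(z_s). Let z_s*, z_s** ∈ Γ be the points with z_s ∈ Γ(z_s*, z_s**) =: E_s and |Γ(z_s*, z_s)| = |Γ(z_s, z_s**)| = s/2, set A_s := closure(Γ ∖ E_s), let Ω_s be the complement of A_s in the Riemann sphere, and let Φ_s : Ω_s → 𝔻* be the conformal map (holomorphic bijection) normalized by Φ_s(∞) = ∞ and Φ_s′(∞) > 0. Then |Φ_s(z_s)| ≥ exp(ε₁ δ(s)). -/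

import Mathlib

open MeasureTheory Metric Set Filter Bornology Complex
open scoped ENNReal NNReal Topology

noncomputable section

/-- `Γ` is a Jordan curve: the image of an injective continuous map of the unit circle. -/
def IsJordanCurve (Γ : Set ℂ) : Prop :=
  ∃ γ : ℂ → ℂ, ContinuousOn γ (Metric.sphere (0:ℂ) 1) ∧
    Set.InjOn γ (Metric.sphere (0:ℂ) 1) ∧ Γ = γ '' (Metric.sphere (0:ℂ) 1)

/-- A (closed) subarc of `Γ`: a closed connected subset. -/
def IsSubarc (Γ J : Set ℂ) : Prop :=
  J ⊆ Γ ∧ IsClosed J ∧ IsPreconnected J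

/-- `|Γ(z₁,z₂)|`: the length (1-dimensional Hausdorff measure) of the shorter subarc of `Γ`
joining `z₁` and `z₂`, described as the infimum of lengths of closed connected subsets of `Γ`
containing both points. -/
def shorterArcLength (Γ : Set ℂ) (z₁ z₂ : ℂ) : ℝ≥0∞ :=
  ⨅ (J : Set ℂ) (_ : IsSubarc Γ J ∧ z₁ ∈ J ∧ z₂ ∈ J), μH[1] J

/-- `J` is (a realization of) the shorter arc `Γ(z₁,z₂)` of `Γ` between `z₁` and `z₂`. -/
def IsShorterArc (Γ : Set ℂ) (z₁ z₂ : ℂ) (J : Set ℂ) : Prop :=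
  IsSubarc Γ J ∧ z₁ ∈ J ∧ z₂ ∈ J ∧ μH[1] J = shorterArcLength Γ z₁ z₂

/-- `Γ` is quasismooth (in the sense of Lavrentiev) with constant `Λ ≥ 1`:
`|Γ(z₁,z₂)| ≤ Λ |z₁ - z₂|`. -/
def IsQuasismooth (Γ : Set ℂ) (Λ : ℝ) : Prop :=
  1 ≤ Λ ∧ ∀ z₁ ∈ Γ, ∀ z₂ ∈ Γ,
    shorterArcLength Γ z₁ z₂ ≤ ENNReal.ofReal (Λ * dist z₁ z₂)

/-- The union of the unbounded connected components of `Γᶜ`; for a Jordan curve `Γ` this is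
the (unique) unbounded component `Ω` of the complement of `Γ`. -/
def unboundedComponent (Γ : Set ℂ) : Set ℂ :=
  {z | z ∉ Γ ∧ ¬ Bornology.IsBounded (connectedComponentIn Γᶜ z)}

/-- `d(A,B) := inf {|z-ζ| : z ∈ A, ζ ∈ B}`. -/
def setDist (A B : Set ℂ) : ℝ := sInf (Set.image2 dist A B)

/-- The exterior `𝔻*` of the closed unit disk (finite part). -/
def extDisk : Set ℂ := {w : ℂ | 1 < ‖w‖}

/-- `Φ` is the conformal (holomorphic bijective) map of `Ω` onto `𝔻* = {|w| > 1}` normalized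
by `Φ(∞) = ∞` and `Φ'(∞) := lim_{z→∞} Φ(z)/z > 0`. -/
def IsExtConformal (Ω : Set ℂ) (Φ : ℂ → ℂ) : Prop :=
  DifferentiableOn ℂ Φ Ω ∧ Set.BijOn Φ Ω extDisk ∧
    ∃ c : ℝ, 0 < c ∧
      Filter.Tendsto (fun z => Φ z / z) (Bornology.cobounded ℂ) (nhds (c : ℂ))

/-- `Φ` additionally extends to a homeomorphism of `closure Ω` onto `{|w| ≥ 1}`. -/
def IsExtConformalClosure (Ω : Set ℂ) (Φ : ℂ → ℂ) : Prop :=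
  IsExtConformal Ω Φ ∧ ContinuousOn Φ (closure Ω) ∧
    Set.BijOn Φ (closure Ω) {w : ℂ | 1 ≤ ‖w‖}

/-- The level curve `Γ_δ := {ζ ∈ Ω : |Φ(ζ)| = 1 + δ}`. -/
def levelCurve (Ω : Set ℂ) (Φ : ℂ → ℂ) (δ : ℝ) : Set ℂ :=
  {ζ ∈ Ω | ‖Φ ζ‖ = 1 + δ}

/-- `ρ_δ(z) := d({z}, Γ_δ)`. -/
def rho (Ω : Set ℂ) (Φ : ℂ → ℂ) (δ : ℝ) (z : ℂ) : ℝ :=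
  Metric.infDist z (levelCurve Ω Φ δ)

/-- `ν ∈ A∞(Γ)` with constant `lam ≥ 1`: `ν(J) ≤ lam · ν(S)` for every subarc `J ⊂ Γ` and
every Borel set `S ⊂ J` with `|J| ≤ 2|S|`. -/
def IsAInftyMeasure (Γ : Set ℂ) (ν : MeasureTheory.Measure ℂ) (lam : ℝ) : Prop :=
  1 ≤ lam ∧ ∀ J S : Set ℂ, IsSubarc Γ J → S ⊆ J → MeasurableSet S →
    μH[1] J ≤ 2 * μH[1] S → ν J ≤ ENNReal.ofReal lam * ν S

/-!
Harnack's inequality transports a lower bound for the positive harmonic function `log ‖Φ_s‖` from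
`ζ_s` to `z_s`.

At `ζ_s` the bound is a form of the Schwarz lemma: since `Ω ⊆ Ω_s`, the map `Φ_s ∘ Φ⁻¹` sends the
exterior disk into itself and fixes infinity, hence `‖Φ_s‖ ≥ ‖Φ‖ = 1 + δ(s)` at `ζ_s`. As `ζ_s` is
within `diam Γ` of `Γ`, the number `δ(s)` is bounded, so `log (1 + δ(s))` is comparable to `δ(s)`.

Between `ζ_s` and `z_s`, Harnack's inequality is applied in two overlapping disks avoiding `A_s`.
One is the disk about `ζ_s` of radius `s = d(Γ, Γ_δ(s))`. The other is the disk about `z_s` of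
radius `s / (2 Λ)`: a subarc from `z_s` to a point of `Γ ∖ E_s` leaves `E_s` through an endpoint, so
it has length at least `s / 2`, and quasismoothness turns this into a lower bound for the distance.
-/

section Inverse

variable {f g : ℂ → ℂ} {U : Set ℂ} {z : ℂ}

theorem not_eventually_eq_const_of_injOn (hU : U ∈ 𝓝 z) (hf : InjOn f U) :
    ¬ ∀ᶠ w in 𝓝 z, f w = f z := by
  intro h
  obtain ⟨w, ⟨hw, hwU⟩, hwz⟩ :=
    (((h.and hU).filter_mono nhdsWithin_le_nhds).and self_mem_nhdsWithin : ∀ᶠ w in 𝓝[≠] z, _).exists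
  exact hwz (hf hwU (mem_of_mem_nhds hU) hw)

theorem nhds_le_map_nhds_of_injOn (hU : IsOpen U) (hf : DifferentiableOn ℂ f U) (hinj : InjOn f U)
    (hz : z ∈ U) : 𝓝 (f z) ≤ map f (𝓝 z) :=
  (hf.analyticAt (hU.mem_nhds hz)).eventually_constant_or_nhds_le_map_nhds.resolve_left
    (not_eventually_eq_const_of_injOn (hU.mem_nhds hz) hinj)

theorem isOpen_image_of_injOn (hU : IsOpen U) (hf : DifferentiableOn ℂ f U) (hinj : InjOn f U) :
    IsOpen (f '' U) := by
  rw [isOpen_iff_mem_nhds]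
  rintro _ ⟨z, hz, rfl⟩
  exact nhds_le_map_nhds_of_injOn hU hf hinj hz (image_mem_map (hU.mem_nhds hz))

theorem eventually_deriv_ne_zero_of_injOn (hU : IsOpen U) (hf : DifferentiableOn ℂ f U)
    (hinj : InjOn f U) (hz : z ∈ U) : ∀ᶠ w in 𝓝[≠] z, deriv f w ≠ 0 := by
  have hderiv : AnalyticAt ℂ (deriv f) z := (hf.analyticAt (hU.mem_nhds hz)).deriv
  refine hderiv.eventually_eq_zero_or_eventually_ne_zero.resolve_left fun h =>
    not_eventually_eq_const_of_injOn (hU.mem_nhds hz) hinj ?_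
  obtain ⟨r, hr, hball⟩ := Metric.eventually_nhds_iff_ball.1 (h.and (hU.mem_nhds hz))
  filter_upwards [ball_mem_nhds z hr] with w hw
  exact isOpen_ball.is_const_of_deriv_eq_zero (convex_ball z r).isPreconnected
    (hf.mono fun x hx => (hball x hx).2) (fun x hx => (hball x hx).1) hw (mem_ball_self hr)

theorem continuousAt_of_leftInvOn (hU : IsOpen U) (hf : DifferentiableOn ℂ f U)
    (hg : LeftInvOn g f U) (hz : z ∈ U) : ContinuousAt g (f z) := by
  have hgf : g ∘ f =ᶠ[𝓝 z] id := mem_of_superset (hU.mem_nhds hz) hg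
  calc map g (𝓝 (f z)) ≤ map g (map f (𝓝 z)) :=
        map_mono (nhds_le_map_nhds_of_injOn hU hf hg.injOn hz)
    _ = 𝓝 (g (f z)) := by rw [Filter.map_map, map_congr hgf, Filter.map_id, hg hz]

theorem differentiableOn_of_leftInvOn (hU : IsOpen U) (hf : DifferentiableOn ℂ f U)
    (hg : LeftInvOn g f U) : DifferentiableOn ℂ g (f '' U) := by
  have hcont : ∀ z ∈ U, ContinuousAt g (f z) := fun z hz => continuousAt_of_leftInvOn hU hf hg hz
  have hmem : ∀ z ∈ U, ∀ᶠ y in 𝓝 (f z), y ∈ f '' U := fun z hz =>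
    (isOpen_image_of_injOn hU hf hg.injOn).mem_nhds (mem_image_of_mem f hz)
  have hfg : ∀ y ∈ f '' U, f (g y) = y := by
    rintro _ ⟨z, hz, rfl⟩
    rw [hg hz]
  have hdiff : ∀ z ∈ U, deriv f z ≠ 0 → DifferentiableAt ℂ g (f z) := fun z hz h0 =>
    (HasDerivAt.of_local_left_inverse (f := f) (hcont z hz)
      ((hg hz).symm ▸ (hf.differentiableAt (hU.mem_nhds hz)).hasDerivAt) h0
      ((hmem z hz).mono hfg)).differentiableAt
  rintro _ ⟨z, hz, rfl⟩
  have hpunctured : Tendsto g (𝓝[≠] (f z)) (𝓝[≠] z) := by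
    refine tendsto_nhdsWithin_iff.2 ⟨?_, ?_⟩
    · simpa only [hg hz] using (hcont z hz).tendsto.mono_left nhdsWithin_le_nhds
    · filter_upwards [self_mem_nhdsWithin, nhdsWithin_le_nhds (hmem z hz)] with y hy hyU hgy
      exact hy (by rw [← hfg y hyU, hgy]; rfl)
  -- Critical points of `f` are isolated, so `g` has a removable singularity at their images.
  refine (analyticAt_of_differentiable_on_punctured_nhds_of_continuousAt ?_
    (hcont z hz)).differentiableAt.differentiableWithinAt
  filter_upwards [hpunctured.eventually (eventually_deriv_ne_zero_of_injOn hU hf hg.injOn hz),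
    nhdsWithin_le_nhds (hmem z hz)]
  rintro _ hderiv ⟨w, hw, rfl⟩
  exact hdiff w hw (hg hw ▸ hderiv)

end Inverse

section Infinity

variable {f g : ℂ → ℂ} {U B : Set ℂ} {w : ℂ}

/-- The germ at `0` of a function with a pole at infinity, read in the coordinate `1 / z` on both
sides; the value `0` at `0` encodes `f ∞ = ∞`. -/
def inversionConj (f : ℂ → ℂ) : ℂ → ℂ :=
  Function.update (fun w => (f w⁻¹)⁻¹) 0 0

theorem inversionConj_zero (f : ℂ → ℂ) : inversionConj f 0 = 0 :=
  Function.update_self ..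

theorem inversionConj_of_ne_zero (f : ℂ → ℂ) (hw : w ≠ 0) : inversionConj f w = (f w⁻¹)⁻¹ :=
  Function.update_of_ne hw ..

theorem continuousAt_inversionConj_zero (hf : Tendsto f (cobounded ℂ) (cobounded ℂ)) :
    ContinuousAt (inversionConj f) 0 :=
  continuousAt_update_same.2
    (tendsto_inv₀_cobounded.comp (hf.comp tendsto_inv₀_nhdsNE_zero))

theorem eventually_inversionConj_ne_zero (hf : Tendsto f (cobounded ℂ) (cobounded ℂ)) :
    ∀ᶠ w in 𝓝[≠] 0, inversionConj f w ≠ 0 := by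
  filter_upwards [self_mem_nhdsWithin,
    tendsto_inv₀_nhdsNE_zero.eventually (hf.eventually (eventually_ne_cobounded 0))] with w hw h0
  rw [inversionConj_of_ne_zero f hw]
  exact inv_ne_zero h0

theorem differentiableAt_inversionConj (hw : w ≠ 0) (hf : DifferentiableAt ℂ f w⁻¹)
    (hf0 : f w⁻¹ ≠ 0) : DifferentiableAt ℂ (inversionConj f) w :=
  ((hf.comp w (differentiableAt_inv hw)).inv hf0).congr_of_eventuallyEq <|
    mem_of_superset (isOpen_ne.mem_nhds hw) fun _ => inversionConj_of_ne_zero f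

theorem analyticAt_inversionConj_zero (hd : ∀ᶠ z in cobounded ℂ, DifferentiableAt ℂ f z)
    (hf : Tendsto f (cobounded ℂ) (cobounded ℂ)) : AnalyticAt ℂ (inversionConj f) 0 := by
  refine analyticAt_of_differentiable_on_punctured_nhds_of_continuousAt ?_
    (continuousAt_inversionConj_zero hf)
  filter_upwards [self_mem_nhdsWithin, tendsto_inv₀_nhdsNE_zero.eventually hd,
    tendsto_inv₀_nhdsNE_zero.eventually (hf.eventually (eventually_ne_cobounded 0))]
    with w hw hdw h0 using differentiableAt_inversionConj hw hdw h0

theorem cobounded_le_map_cobounded (hd : ∀ᶠ z in cobounded ℂ, DifferentiableAt ℂ f z)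
    (hf : Tendsto f (cobounded ℂ) (cobounded ℂ)) : cobounded ℂ ≤ map f (cobounded ℂ) := by
  have hnhds : 𝓝 0 ≤ map (inversionConj f) (𝓝 0) := by
    have h := (analyticAt_inversionConj_zero hd hf).eventually_constant_or_nhds_le_map_nhds
    rw [inversionConj_zero] at h
    refine h.resolve_left fun hconst => ?_
    obtain ⟨w, hw, hw0⟩ :=
      ((hconst.filter_mono nhdsWithin_le_nhds).and (eventually_inversionConj_ne_zero hf)).exists
    exact hw0 hw
  have hpunctured : 𝓝[≠] (0 : ℂ) ≤ map (inversionConj f) (𝓝[≠] 0) := calc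
    𝓝[≠] (0 : ℂ) ≤ map (inversionConj f) (𝓝 0) ⊓ 𝓟 {0}ᶜ := inf_le_inf_right _ hnhds
    _ = map (inversionConj f) (𝓝 0 ⊓ 𝓟 (inversionConj f ⁻¹' {0}ᶜ)) :=
      map_inf_principal_preimage.symm
    _ ≤ map (inversionConj f) (𝓝[≠] 0) := by
      refine map_mono (inf_le_inf_left _ (principal_mono.2 fun w hw h0 => hw ?_))
      exact h0 ▸ inversionConj_zero f
  have hconj : (·⁻¹) ∘ inversionConj f =ᶠ[𝓝[≠] 0] f ∘ (·⁻¹) := by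
    filter_upwards [self_mem_nhdsWithin] with w hw
    simp only [Function.comp_apply, inversionConj_of_ne_zero f hw, inv_inv]
  calc cobounded ℂ = map (·⁻¹) (𝓝[≠] 0) := by rw [Filter.map_inv, inv_nhdsNE_zero]
    _ ≤ map (·⁻¹) (map (inversionConj f) (𝓝[≠] 0)) := map_mono hpunctured
    _ = map f (cobounded ℂ) := by
      rw [Filter.map_map, map_congr hconj, ← Filter.map_map, Filter.map_inv, inv_nhdsNE_zero]

theorem isBounded_image_inter_of_injOn (hd : ∀ᶠ z in cobounded ℂ, DifferentiableAt ℂ f z)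
    (hf : Tendsto f (cobounded ℂ) (cobounded ℂ)) (hU : U ∈ cobounded ℂ) (hinj : InjOn f U)
    (hB : IsBounded B) : IsBounded (f '' (U ∩ B)) := by
  have hmem : f '' (U \ B) ∈ cobounded ℂ := cobounded_le_map_cobounded hd hf
    (image_mem_map (inter_mem hU (isBounded_def.1 hB)))
  rw [isBounded_def]
  refine mem_of_superset hmem ?_
  rintro _ ⟨z, hz, rfl⟩ ⟨w, hw, hwz⟩
  exact hz.2 (hinj hw.1 hz.1 hwz ▸ hw.2)

theorem tendsto_cobounded_of_leftInvOn (hd : ∀ᶠ z in cobounded ℂ, DifferentiableAt ℂ f z)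
    (hf : Tendsto f (cobounded ℂ) (cobounded ℂ)) (hU : U ∈ cobounded ℂ) (hg : LeftInvOn g f U) :
    Tendsto g (cobounded ℂ) (cobounded ℂ) := by
  have hgf : g ∘ f =ᶠ[cobounded ℂ] id := mem_of_superset hU hg
  calc map g (cobounded ℂ) ≤ map g (map f (cobounded ℂ)) :=
        map_mono (cobounded_le_map_cobounded hd hf)
    _ = cobounded ℂ := by rw [Filter.map_map, map_congr hgf, Filter.map_id]

theorem norm_le_norm_of_mapsTo_extDisk (hf : DifferentiableOn ℂ f extDisk)
    (hmaps : MapsTo f extDisk extDisk) (hlim : Tendsto f (cobounded ℂ) (cobounded ℂ))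
    (hw : w ∈ extDisk) : ‖w‖ ≤ ‖f w‖ := by
  have hopen : IsOpen extDisk := isOpen_lt continuous_const continuous_norm
  have hpos : ∀ z ∈ extDisk, 0 < ‖z‖ := fun _ hz => one_pos.trans hz
  have hinv : ∀ z ∈ ball (0 : ℂ) 1, z ≠ 0 → z⁻¹ ∈ extDisk := fun z hz hz0 => by
    rw [extDisk, mem_ofPred_eq, norm_inv]
    exact (one_lt_inv₀ (norm_pos_iff.2 hz0)).2 (mem_ball_zero_iff.1 hz)
  have hdiff : DifferentiableOn ℂ (inversionConj f) (ball 0 1) := by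
    refine (differentiableOn_compl_singleton_and_continuousAt_iff (ball_mem_nhds 0 one_pos)).1
      ⟨fun z ⟨hz, hz0⟩ => ?_, continuousAt_inversionConj_zero hlim⟩
    have hz' := hinv z hz hz0
    exact (differentiableAt_inversionConj hz0 (hf.differentiableAt (hopen.mem_nhds hz'))
      (norm_pos_iff.1 (hpos _ (hmaps hz')))).differentiableWithinAt
  have hball : MapsTo (inversionConj f) (ball 0 1) (closedBall 0 1) := by
    intro z hz
    rw [mem_closedBall_zero_iff]
    rcases eq_or_ne z 0 with rfl | hz0
    · simp only [inversionConj_zero, norm_zero, zero_le_one]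
    · rw [inversionConj_of_ne_zero f hz0, norm_inv]
      exact inv_le_one_of_one_le₀ (hmaps (hinv z hz hz0)).le
  have hw0 : w⁻¹ ≠ 0 := inv_ne_zero (norm_pos_iff.1 (hpos w hw))
  have hschwarz := norm_le_norm_of_mapsTo_ball hdiff hball (inversionConj_zero f) (z := w⁻¹)
    (by rw [norm_inv]; exact inv_lt_one_of_one_lt₀ hw)
  rw [inversionConj_of_ne_zero f hw0, inv_inv, norm_inv, norm_inv] at hschwarz
  exact (inv_le_inv₀ (hpos _ (hmaps hw)) (hpos w hw)).1 hschwarz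

end Infinity

namespace IsExtConformal

variable {U : Set ℂ} {Φ Ψ : ℂ → ℂ}

theorem tendsto_cobounded (hΦ : IsExtConformal U Φ) : Tendsto Φ (cobounded ℂ) (cobounded ℂ) := by
  obtain ⟨-, -, c, hc, hlim⟩ := hΦ
  rw [← tendsto_norm_atTop_iff_cobounded]
  have hc' : 0 < ‖(c : ℂ)‖ := norm_pos_iff.2 (ofReal_ne_zero.2 hc.ne')
  refine (hlim.norm.pos_mul_atTop hc' tendsto_norm_cobounded_atTop).congr' ?_
  filter_upwards [eventually_ne_cobounded 0] with z hz
  rw [← norm_mul, div_mul_cancel₀ _ hz]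

theorem eventually_differentiableAt (hΦ : IsExtConformal U Φ) (hU : IsOpen U)
    (hU' : U ∈ cobounded ℂ) : ∀ᶠ z in cobounded ℂ, DifferentiableAt ℂ Φ z :=
  mem_of_superset hU' fun _ hz => hΦ.1.differentiableAt (hU.mem_nhds hz)

theorem norm_le_norm (hΦ : IsExtConformal U Φ) (hU : IsOpen U) (hU' : U ∈ cobounded ℂ)
    (hΨ : DifferentiableOn ℂ Ψ U) (hmaps : MapsTo Ψ U extDisk)
    (hlim : Tendsto Ψ (cobounded ℂ) (cobounded ℂ)) {z : ℂ} (hz : z ∈ U) : ‖Φ z‖ ≤ ‖Ψ z‖ := by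
  have hbij := hΦ.2.1
  set φ := Function.invFunOn Φ U
  have hleft : LeftInvOn φ Φ U := hbij.injOn.leftInvOn_invFunOn
  have hφmaps : MapsTo φ extDisk U := hbij.surjOn.mapsTo_invFunOn
  have hφ : DifferentiableOn ℂ φ extDisk :=
    hbij.image_eq ▸ differentiableOn_of_leftInvOn hU hΦ.1 hleft
  have hφlim : Tendsto φ (cobounded ℂ) (cobounded ℂ) :=
    tendsto_cobounded_of_leftInvOn (hΦ.eventually_differentiableAt hU hU') hΦ.tendsto_cobounded
      hU' hleft
  have hschwarz := norm_le_norm_of_mapsTo_extDisk (hΨ.comp hφ hφmaps) (hmaps.comp hφmaps)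
    (hlim.comp hφlim) (hbij.mapsTo hz)
  rwa [Function.comp_apply, hleft hz] at hschwarz

end IsExtConformal

section UnboundedComponent

variable {Γ : Set ℂ}

theorem isPreconnected_setOf_lt_norm {R : ℝ} (hR : 0 ≤ R) : IsPreconnected {z : ℂ | R < ‖z‖} := by
  have himage : {z : ℂ | R < ‖z‖} =
      (fun p : ℝ × ℝ => (p.1 : ℂ) * exp (p.2 * I)) '' (Ioi R ×ˢ univ) := by
    refine Subset.antisymm (fun z hz => ⟨(‖z‖, arg z), ⟨hz, trivial⟩, norm_mul_exp_arg_mul_I z⟩) ?_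
    rintro _ ⟨⟨r, t⟩, ⟨hr : R < r, -⟩, rfl⟩
    simpa [norm_exp_ofReal_mul_I, abs_of_pos (hR.trans_lt hr)] using hr
  rw [himage]
  exact (isPreconnected_Ioi.prod isPreconnected_univ).image _ (by fun_prop)

theorem isOpen_unboundedComponent (hΓ : IsClosed Γ) : IsOpen (unboundedComponent Γ) := by
  rw [isOpen_iff_mem_nhds]
  rintro z ⟨hz, hunbdd⟩
  filter_upwards [hΓ.isOpen_compl.connectedComponentIn.mem_nhds (mem_connectedComponentIn hz)]
    with w hw
  exact ⟨connectedComponentIn_subset _ _ hw, connectedComponentIn_eq hw ▸ hunbdd⟩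

theorem unboundedComponent_mem_cobounded (hΓ : IsBounded Γ) :
    unboundedComponent Γ ∈ cobounded ℂ := by
  obtain ⟨R, hR, hΓR⟩ := hΓ.subset_closedBall_lt 0 0
  have hext : {z : ℂ | R < ‖z‖} ∈ cobounded ℂ :=
    tendsto_norm_cobounded_atTop.eventually (eventually_gt_atTop R)
  have hsub : {z : ℂ | R < ‖z‖} ⊆ Γᶜ := fun z hz hzΓ =>
    (mem_closedBall_zero_iff.1 (hΓR hzΓ)).not_gt hz
  refine mem_of_superset hext fun z hz => ⟨hsub hz, fun hbdd => ?_⟩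
  have hcomp : {z : ℂ | R < ‖z‖} ⊆ connectedComponentIn Γᶜ z :=
    (isPreconnected_setOf_lt_norm hR.le).subset_connectedComponentIn hz hsub
  obtain ⟨w, hw, hw'⟩ := Filter.nonempty_of_mem (inter_mem hext (isBounded_def.1 hbdd))
  exact hw' (hcomp hw)

end UnboundedComponent

section Harnack

open InnerProductSpace ComplexConjugate

variable {u : ℂ → ℝ} {V : Set ℂ} {c z ζ : ℂ} {r s : ℝ}

theorem sq_norm_sub_eq (a b : ℂ) : ‖a - b‖ ^ 2 = (a.re - b.re) ^ 2 + (a.im - b.im) ^ 2 := by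
  rw [Complex.sq_norm, normSq_apply, sub_re, sub_im]
  ring

theorem sq_norm_add_conj_eq (a b : ℂ) :
    ‖a + conj b‖ ^ 2 = (a.re + b.re) ^ 2 + (a.im - b.im) ^ 2 := by
  rw [Complex.sq_norm, normSq_apply, add_re, add_im, conj_re, conj_im]
  ring

theorem norm_sub_le_norm_add_conj {a b : ℂ} (ha : 0 ≤ a.re) (hb : 0 ≤ b.re) :
    ‖a - b‖ ≤ ‖a + conj b‖ := by
  refine le_of_sq_le_sq ?_ (norm_nonneg _)
  rw [sq_norm_sub_eq, sq_norm_add_conj_eq]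
  linarith only [mul_nonneg ha hb]

theorem mul_abs_re_sub_le {a b : ℂ} {d : ℝ} (hd : 0 ≤ d) (hdr : d ≤ r) (hab : 0 ≤ a.re + b.re)
    (h : r * ‖a - b‖ ≤ d * ‖a + conj b‖) : r * |a.re - b.re| ≤ d * (a.re + b.re) := by
  have hr : 0 ≤ r := hd.trans hdr
  have hsq : (r * ‖a - b‖) ^ 2 ≤ (d * ‖a + conj b‖) ^ 2 := by gcongr
  have him : d ^ 2 * (a.im - b.im) ^ 2 ≤ r ^ 2 * (a.im - b.im) ^ 2 := by gcongr
  rw [mul_pow, mul_pow, sq_norm_sub_eq, sq_norm_add_conj_eq] at hsq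
  refine le_of_sq_le_sq ?_ (mul_nonneg hd hab)
  rw [mul_pow, mul_pow, sq_abs]
  linarith only [hsq, him]

/-- The Schwarz lemma applies to `(F - b) / (F + conj b)`, `b = F c`, since the Cayley transform
`w ↦ (w - b) / (w + conj b)` maps the right half-plane into the unit disk. -/
theorem mul_norm_sub_le_mul_norm_add_conj {F : ℂ → ℂ} (hF : DifferentiableOn ℂ F (ball c r))
    (hre : ∀ w ∈ ball c r, 0 < (F w).re) (hz : z ∈ ball c r) :
    r * ‖F z - F c‖ ≤ dist z c * ‖F z + conj (F c)‖ := by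
  have hr : 0 < r := pos_of_mem_ball hz
  have hc : 0 < (F c).re := hre c (mem_ball_self hr)
  have hden : ∀ w ∈ ball c r, F w + conj (F c) ≠ 0 := fun w hw h => by
    have hsum : (F w).re + (F c).re = 0 := by simpa using congrArg re h
    linarith [hre w hw]
  have hschwarz := dist_le_div_mul_dist_of_mapsTo_ball (R₂ := 1)
    (f := fun w => (F w - F c) / (F w + conj (F c)))
    ((hF.sub_const _).div (hF.add_const _) hden) (fun w hw => by
      simp only [sub_self, zero_div, mem_closedBall_zero_iff, norm_div]
      exact div_le_one_of_le₀ (norm_sub_le_norm_add_conj (hre w hw).le hc.le) (norm_nonneg _)) hz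
  simp only [sub_self, zero_div, dist_zero_right, norm_div] at hschwarz
  rwa [div_le_iff₀ (norm_pos_iff.2 (hden z hz)), one_div, mul_assoc, le_inv_mul_iff₀ hr]
    at hschwarz

/-- With `d = dist z c`, this is `(r - d) / (r + d) ≤ u z / u c ≤ (r + d) / (r - d)`. -/
theorem harnack_inequality (hu : HarmonicOnNhd u (ball c r)) (hpos : ∀ w ∈ ball c r, 0 < u w)
    (hz : z ∈ ball c r) : r * |u z - u c| ≤ dist z c * (u z + u c) := by
  obtain ⟨F, hF, hFu⟩ := hu.exists_analyticOnNhd_ball_re_eq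
  have hc : c ∈ ball c r := mem_ball_self (pos_of_mem_ball hz)
  have hre : ∀ w ∈ ball c r, (F w).re = u w := fun w hw => hFu hw
  have hpos' : ∀ w ∈ ball c r, 0 < (F w).re := fun w hw => hre w hw ▸ hpos w hw
  have h := mul_abs_re_sub_le dist_nonneg hz.le (add_pos (hpos' z hz) (hpos' c hc)).le
    (mul_norm_sub_le_mul_norm_add_conj hF.differentiableOn hpos' hz)
  rwa [hre z hz, hre c hc] at h

/-- The passage from `ζ` to `z` is through the point of the segment `[z, ζ]` at distance `r / 2`
from `z`, which lies in both disks. -/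
theorem harnack_inequality_two_disks (hu : HarmonicOnNhd u V) (hpos : ∀ w ∈ V, 0 < u w) (hr : 0 < r)
    (hrs : r ≤ s) (hzζ : dist z ζ = s) (hζV : ball ζ s ⊆ V) (hzV : ball z r ⊆ V) :
    r / (12 * s) * u ζ ≤ u z := by
  have hs : 0 < s := hr.trans_le hrs
  set p : ℂ := AffineMap.lineMap z ζ (r / (2 * s))
  have hpz : dist p z = r / 2 := by
    rw [dist_lineMap_left, hzζ, Real.norm_of_nonneg (by positivity)]
    field_simp
  have hpζ : dist p ζ = s - r / 2 := by
    rw [dist_lineMap_right, hzζ, Real.norm_of_nonneg (by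
      rw [sub_nonneg, div_le_one (by positivity)]; linarith)]
    field_simp
  have hp_mem_z : p ∈ ball z r := by rw [mem_ball, hpz]; linarith
  have hp_mem_ζ : p ∈ ball ζ s := by rw [mem_ball, hpζ]; linarith
  have hp : 0 < u p := hpos p (hzV hp_mem_z)
  have hharnackζ : s * |u p - u ζ| ≤ (s - r / 2) * (u p + u ζ) :=
    hpζ ▸ harnack_inequality (hu.mono hζV) (fun w hw => hpos w (hζV hw)) hp_mem_ζ
  have hharnackz : r * |u p - u z| ≤ r / 2 * (u p + u z) :=
    hpz ▸ harnack_inequality (hu.mono hzV) (fun w hw => hpos w (hzV hw)) hp_mem_z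
  have hζp : r / 2 * u ζ ≤ 2 * s * u p := by
    nlinarith [mul_le_mul_of_nonneg_left (neg_le_abs (u p - u ζ)) hs.le, mul_pos hr hp]
  have hpz' : u p ≤ 3 * u z := by
    refine le_of_mul_le_mul_left ?_ hr
    nlinarith [mul_le_mul_of_nonneg_left (le_abs_self (u p - u z)) hr.le]
  rw [div_mul_eq_mul_div, div_le_iff₀ (by positivity)]
  calc r * u ζ ≤ 2 * (2 * s * u p) := by linarith
    _ ≤ 2 * (2 * s * (3 * u z)) := by gcongr
    _ = u z * (12 * s) := by ring

theorem harmonicOnNhd_log_norm {f : ℂ → ℂ} (hV : IsOpen V) (hf : DifferentiableOn ℂ f V)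
    (h0 : ∀ w ∈ V, f w ≠ 0) : HarmonicOnNhd (fun w => Real.log ‖f w‖) V := fun w hw =>
  (hf.analyticAt (hV.mem_nhds hw)).harmonicAt_log_norm (h0 w hw)

end Harnack

section CircleArc

open scoped Real

variable {X : Type*} {γ : Circle → X} {x y z t : ℝ}

/-- The image under a closed curve `γ` of the arc of the unit circle described counterclockwise
from the angle `x` to the angle `y`. -/
def circleArc (γ : Circle → X) (x y : ℝ) : Set X :=
  γ ∘ Circle.exp '' Icc x y

theorem mem_circleArc (ht : t ∈ Icc x y) : γ (Circle.exp t) ∈ circleArc γ x y :=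
  mem_image_of_mem _ ht

theorem circleArc_union_circleArc (hxy : x ≤ y) (hyz : y ≤ z) :
    circleArc γ x y ∪ circleArc γ y z = circleArc γ x z := by
  rw [circleArc, circleArc, ← image_union, Icc_union_Icc_eq_Icc hxy hyz, circleArc]

theorem circleArc_add_two_pi (γ : Circle → X) (x : ℝ) :
    circleArc γ x (x + 2 * π) = range γ := by
  rw [circleArc, (Circle.periodic_exp.comp γ).image_Icc Real.two_pi_pos]
  exact Circle.exp_surjective.range_comp γ

theorem circleArc_inter_circleArc_subset (hγ : Function.Injective γ) (hzx : z ≤ x + 2 * π) :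
    circleArc γ x y ∩ circleArc γ y z ⊆ {γ (Circle.exp x), γ (Circle.exp y)} := by
  rintro _ ⟨⟨t, ht, rfl⟩, ⟨t', ht', htt'⟩⟩
  obtain ⟨m, hm⟩ := Circle.exp_eq_exp.1 (hγ htt')
  have hπ := Real.two_pi_pos
  rcases lt_trichotomy m 1 with h | rfl | h
  · have hm0 : (m : ℝ) ≤ 0 := by exact_mod_cast Int.lt_add_one_iff.1 h
    have hty : t = y := le_antisymm ht.2 (by nlinarith [ht'.1])
    exact Or.inr (congrArg (γ ∘ Circle.exp) hty)
  · have htx : t = x := le_antisymm (by rw [Int.cast_one] at hm; linarith [ht'.2]) ht.1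
    exact Or.inl (congrArg (γ ∘ Circle.exp) htx)
  · have hm2 : (1 : ℝ) < m := by exact_mod_cast h
    nlinarith [ht.1, ht'.2]

variable [TopologicalSpace X] {E J : Set X}

theorem isCompact_circleArc (hγ : Continuous γ) (x y : ℝ) : IsCompact (circleArc γ x y) :=
  isCompact_Icc.image (by fun_prop)

theorem isPreconnected_circleArc (hγ : Continuous γ) (x y : ℝ) :
    IsPreconnected (circleArc γ x y) :=
  isPreconnected_Icc.image _ (by fun_prop)

variable [T2Space X]

theorem mem_or_mem_of_inter_circleArc_nonempty (hγ : Continuous γ) (hinj : Function.Injective γ)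
    (hJ : IsPreconnected J) (hJγ : J ⊆ range γ) (hxy : x ≤ y) (hyx : y ≤ x + 2 * π)
    (h₁ : (J ∩ circleArc γ x y).Nonempty) (h₂ : (J ∩ circleArc γ y (x + 2 * π)).Nonempty) :
    γ (Circle.exp x) ∈ J ∨ γ (Circle.exp y) ∈ J := by
  obtain ⟨w, hwJ, hw⟩ := isPreconnected_closed_iff.1 hJ _ _ (isCompact_circleArc hγ x y).isClosed
    (isCompact_circleArc hγ y (x + 2 * π)).isClosed
    (by rwa [circleArc_union_circleArc hxy hyx, circleArc_add_two_pi]) h₁ h₂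
  rcases circleArc_inter_circleArc_subset hinj le_rfl hw with rfl | rfl
  exacts [Or.inl hwJ, Or.inr hwJ]

theorem circleArc_subset_of_notMem (hγ : Continuous γ) (hinj : Function.Injective γ)
    (hE : IsPreconnected E) (hEγ : E ⊆ range γ) (ht : γ (Circle.exp t) ∉ E) (htx : t ≤ x)
    (hyt : y ≤ t + 2 * π) (hx : γ (Circle.exp x) ∈ E) (hy : γ (Circle.exp y) ∈ E) :
    circleArc γ x y ⊆ E := by
  rintro _ ⟨v, hv, rfl⟩
  exact (mem_or_mem_of_inter_circleArc_nonempty hγ hinj hE hEγ (htx.trans hv.1) (hv.2.trans hyt)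
    ⟨_, hx, mem_circleArc ⟨htx, hv.1⟩⟩ ⟨_, hy, mem_circleArc ⟨hv.2, hyt⟩⟩).resolve_left ht

end CircleArc

section ArcMeasure

open scoped Real

variable {X : Type*} [MeasurableSpace X] {μ : Measure X} {E : Set X}

theorem measure_eq_zero_of_measure_le {A B : Set X} (hA : MeasurableSet A) (hAE : A ⊆ E)
    (hBE : B ⊆ E) (hAB : μ (A ∩ B) = 0) (hE : μ E ≠ ∞) (hEA : μ E ≤ μ A) : μ B = 0 := by
  have hdiff : μ (E \ A) = 0 := by
    rw [measure_sdiff hAE hA.nullMeasurableSet (measure_ne_top_of_subset hAE hE)]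
    exact tsub_eq_zero_of_le hEA
  refine measure_mono_null (fun w hw => ?_) (measure_union_null hdiff hAB)
  by_cases hwA : w ∈ A
  exacts [Or.inr ⟨hwA, hw⟩, Or.inl ⟨hBE hw, hwA⟩]

variable [NullSingletonClass μ] {γ : Circle → X} {θ α β u x y z : ℝ}

theorem measure_circleArc_inter_circleArc (hinj : Function.Injective γ) (hzx : z ≤ x + 2 * π) :
    μ (circleArc γ x y ∩ circleArc γ y z) = 0 :=
  measure_mono_null (circleArc_inter_circleArc_subset hinj hzx)
    (((finite_singleton _).insert _).measure_zero μ)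

variable [TopologicalSpace X] [T2Space X] [OpensMeasurableSpace X]

/-- Were `u` outside `[α, β]`, the connected set `E` would contain the arc from `α` to `β` together
with one of the two arcs joining it to `γ θ`, contradicting the minimality `hmin`. -/
theorem mem_Icc_of_notMem_of_measure_le (hγ : Continuous γ) (hinj : Function.Injective γ)
    (hE : IsPreconnected E) (hEγ : E ⊆ range γ) (hEtop : μ E ≠ ∞) (hθα : θ ≤ α) (hαβ : α ≤ β)
    (hβθ : β ≤ θ + 2 * π) (hu : u ∈ Icc θ (θ + 2 * π)) (hθE : γ (Circle.exp θ) ∈ E)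
    (hαE : γ (Circle.exp α) ∈ E) (hβE : γ (Circle.exp β) ∈ E) (huE : γ (Circle.exp u) ∉ E)
    (hmin : μ E ≤ μ (circleArc γ α β)) (hα : μ (circleArc γ θ α) ≠ 0)
    (hβ : μ (circleArc γ β (θ + 2 * π)) ≠ 0) : u ∈ Icc α β := by
  have hmeas : MeasurableSet (circleArc γ α β) :=
    (isCompact_circleArc hγ α β).isClosed.measurableSet
  by_contra hout
  rcases not_and_or.1 hout with h | h
  · have hsub : circleArc γ α (θ + 2 * π) ⊆ E :=
      circleArc_subset_of_notMem hγ hinj hE hEγ huE (not_le.1 h).le (by linarith [hu.1]) hαE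
        (by rwa [Circle.periodic_exp])
    rw [← circleArc_union_circleArc hαβ hβθ, union_subset_iff] at hsub
    exact hβ (measure_eq_zero_of_measure_le hmeas hsub.1 hsub.2
      (measure_circleArc_inter_circleArc hinj (by linarith)) hEtop hmin)
  · have hsub : circleArc γ θ β ⊆ E :=
      circleArc_subset_of_notMem (t := u - 2 * π) hγ hinj hE hEγ
        (by rwa [Circle.periodic_exp.sub_eq]) (by linarith [hu.2]) (by linarith [not_le.1 h]) hθE
        hβE
    rw [← circleArc_union_circleArc hθα hαβ, union_subset_iff] at hsub
    exact hα (measure_eq_zero_of_measure_le hmeas hsub.2 hsub.1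
      (inter_comm _ _ ▸ measure_circleArc_inter_circleArc hinj hβθ) hEtop hmin)

end ArcMeasure

section ShorterArc

open scoped Real

variable {Γ E J : Set ℂ} {a b p z : ℂ}

theorem IsJordanCurve.exists_eq_range (hΓ : IsJordanCurve Γ) :
    ∃ γ : Circle → ℂ, Continuous γ ∧ Function.Injective γ ∧ Γ = range γ := by
  obtain ⟨γ, hcont, hinj, rfl⟩ := hΓ
  have hmem : ∀ w : Circle, (w : ℂ) ∈ sphere (0 : ℂ) 1 := fun w => w.2
  refine ⟨fun w => γ w, hcont.comp_continuous continuous_subtype_val hmem,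
    fun v w h => Subtype.ext (hinj (hmem v) (hmem w) h), ?_⟩
  rw [image_eq_range]
  rfl

theorem IsJordanCurve.isCompact (hΓ : IsJordanCurve Γ) : IsCompact Γ := by
  obtain ⟨γ, hγ, -, rfl⟩ := hΓ.exists_eq_range
  exact isCompact_range hγ

theorem isSubarc_circleArc {γ : Circle → ℂ} (hγ : Continuous γ) (x y : ℝ) :
    IsSubarc (range γ) (circleArc γ x y) :=
  ⟨image_subset_iff.2 fun _ _ => mem_range_self _, (isCompact_circleArc hγ x y).isClosed,
    isPreconnected_circleArc hγ x y⟩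

theorem shorterArcLength_le (hJ : IsSubarc Γ J) (ha : a ∈ J) (hb : b ∈ J) :
    shorterArcLength Γ a b ≤ μH[1] J :=
  iInf₂_le J ⟨hJ, ha, hb⟩

theorem shorterArcLength_comm (Γ : Set ℂ) (a b : ℂ) :
    shorterArcLength Γ a b = shorterArcLength Γ b a := by
  simp only [shorterArcLength, and_comm (a := a ∈ _)]

theorem IsShorterArc.symm (hE : IsShorterArc Γ a b E) : IsShorterArc Γ b a E :=
  ⟨hE.1, hE.2.2.1, hE.2.1, shorterArcLength_comm Γ a b ▸ hE.2.2.2⟩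

theorem shorterArcLength_le_hausdorffMeasure_circleArc {γ : Circle → ℂ} (hγ : Continuous γ)
    {x y : ℝ} (hxy : x ≤ y) :
    shorterArcLength (range γ) (γ (Circle.exp x)) (γ (Circle.exp y)) ≤ μH[1] (circleArc γ x y) :=
  shorterArcLength_le (isSubarc_circleArc hγ x y) (mem_circleArc ⟨le_rfl, hxy⟩)
    (mem_circleArc ⟨hxy, le_rfl⟩)

theorem IsShorterArc.mem_or_mem_of_angle_le {γ : Circle → ℂ} (hγ : Continuous γ)
    (hinj : Function.Injective γ) {θ α β u : ℝ} (hθα : θ ≤ α) (hαβ : α ≤ β)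
    (hβθ : β ≤ θ + 2 * π) (hu : u ∈ Icc θ (θ + 2 * π))
    (hE : IsShorterArc (range γ) (γ (Circle.exp α)) (γ (Circle.exp β)) E) (hEtop : μH[1] E ≠ ∞)
    (hθE : γ (Circle.exp θ) ∈ E)
    (hα : shorterArcLength (range γ) (γ (Circle.exp θ)) (γ (Circle.exp α)) ≠ 0)
    (hβ : shorterArcLength (range γ) (γ (Circle.exp θ)) (γ (Circle.exp β)) ≠ 0)
    (hJ : IsPreconnected J) (hJγ : J ⊆ range γ) (hθJ : γ (Circle.exp θ) ∈ J)
    (huJ : γ (Circle.exp u) ∈ J) (huE : γ (Circle.exp u) ∉ E) :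
    γ (Circle.exp α) ∈ J ∨ γ (Circle.exp β) ∈ J := by
  have hatomless : NullSingletonClass (μH[1] : Measure ℂ) :=
    Measure.nullSingletonClass_hausdorff ℂ one_pos
  have hθ : γ (Circle.exp (θ + 2 * π)) = γ (Circle.exp θ) := by rw [Circle.periodic_exp]
  have hα' : μH[1] (circleArc γ θ α) ≠ 0 := fun h =>
    hα (le_zero_iff.1 (h ▸ shorterArcLength_le_hausdorffMeasure_circleArc hγ hθα))
  have hβ' : μH[1] (circleArc γ β (θ + 2 * π)) ≠ 0 := fun h => by
    rw [shorterArcLength_comm, ← hθ] at hβ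
    exact hβ (le_zero_iff.1 (h ▸ shorterArcLength_le_hausdorffMeasure_circleArc hγ hβθ))
  have huαβ : u ∈ Icc α β := mem_Icc_of_notMem_of_measure_le hγ hinj hE.1.2.2 hE.1.1 hEtop hθα hαβ
    hβθ hu hθE hE.2.1 hE.2.2.1 huE
    (hE.2.2.2 ▸ shorterArcLength_le_hausdorffMeasure_circleArc hγ hαβ) hα' hβ'
  exact mem_or_mem_of_inter_circleArc_nonempty hγ hinj hJ hJγ hαβ (by linarith)
    ⟨_, huJ, mem_circleArc huαβ⟩ ⟨_, hθJ, hθ ▸ mem_circleArc ⟨hβθ, by linarith⟩⟩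

theorem IsShorterArc.mem_or_mem_of_notMem (hΓ : IsJordanCurve Γ) (hE : IsShorterArc Γ a b E)
    (hEtop : μH[1] E ≠ ∞) (hpE : p ∈ E) (ha : shorterArcLength Γ p a ≠ 0)
    (hb : shorterArcLength Γ p b ≠ 0) (hJ : IsPreconnected J) (hJΓ : J ⊆ Γ) (hpJ : p ∈ J)
    (hzJ : z ∈ J) (hzE : z ∉ E) : a ∈ J ∨ b ∈ J := by
  obtain ⟨γ, hγ, hinj, rfl⟩ := hΓ.exists_eq_range
  obtain ⟨θ, -, rfl⟩ : p ∈ circleArc γ 0 (0 + 2 * π) := by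
    rw [circleArc_add_two_pi]
    exact hJΓ hpJ
  have hangle : ∀ w ∈ range γ, ∃ t ∈ Icc θ (θ + 2 * π), γ (Circle.exp t) = w := fun w hw => by
    rwa [← circleArc_add_two_pi γ θ] at hw
  obtain ⟨α, hα, rfl⟩ := hangle a (hE.1.1 hE.2.1)
  obtain ⟨β, hβ, rfl⟩ := hangle b (hE.1.1 hE.2.2.1)
  obtain ⟨u, hu, rfl⟩ := hangle z (hJΓ hzJ)
  rcases le_total α β with hαβ | hβα
  · exact hE.mem_or_mem_of_angle_le hγ hinj hα.1 hαβ hβ.2 hu hEtop hpE ha hb hJ hJΓ hpJ hzJ hzE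
  · exact (hE.symm.mem_or_mem_of_angle_le hγ hinj hβ.1 hβα hα.2 hu hEtop hpE hb ha hJ hJΓ hpJ hzJ
      hzE).symm

theorem IsShorterArc.hausdorffMeasure_ne_top {Λ : ℝ} (hΓ : IsQuasismooth Γ Λ)
    (hE : IsShorterArc Γ a b E) : μH[1] E ≠ ∞ :=
  hE.2.2.2 ▸ ne_top_of_le_ne_top ENNReal.ofReal_ne_top
    (hΓ.2 a (hE.1.1 hE.2.1) b (hE.1.1 hE.2.2.1))

/-- Every subarc joining `p` to a point of `Γ \ E` passes through an endpoint of `E`. -/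
theorem IsShorterArc.le_shorterArcLength_of_notMem {Λ : ℝ} (hΓ : IsJordanCurve Γ)
    (hΓΛ : IsQuasismooth Γ Λ) (hE : IsShorterArc Γ a b E) (hpE : p ∈ E) {ℓ : ℝ≥0∞} (hℓ : ℓ ≠ 0)
    (ha : ℓ ≤ shorterArcLength Γ a p) (hb : ℓ ≤ shorterArcLength Γ p b) (hzE : z ∉ E) :
    ℓ ≤ shorterArcLength Γ z p := by
  rw [shorterArcLength_comm] at ha
  refine le_iInf₂ fun J ⟨hJ, hzJ, hpJ⟩ => ?_
  have hpos : ∀ {w}, ℓ ≤ shorterArcLength Γ p w → shorterArcLength Γ p w ≠ 0 := fun h h0 =>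
    hℓ (le_zero_iff.1 (h0 ▸ h))
  rcases hE.mem_or_mem_of_notMem hΓ (hE.hausdorffMeasure_ne_top hΓΛ) hpE (hpos ha) (hpos hb)
    hJ.2.2 hJ.1 hpJ hzJ hzE with h | h
  · exact ha.trans (shorterArcLength_le hJ hpJ h)
  · exact hb.trans (shorterArcLength_le hJ hpJ h)

theorem IsShorterArc.ball_subset_compl_closure {Λ s : ℝ} (hΓ : IsJordanCurve Γ)
    (hΓΛ : IsQuasismooth Γ Λ) (hE : IsShorterArc Γ a b E) (hpE : p ∈ E) (hs : 0 < s)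
    (ha : shorterArcLength Γ a p = ENNReal.ofReal s)
    (hb : shorterArcLength Γ p b = ENNReal.ofReal s) :
    ball p (s / Λ) ⊆ (closure (Γ \ E))ᶜ := by
  have hΛ : 0 < Λ := one_pos.trans_le hΓΛ.1
  rw [subset_compl_comm]
  refine closure_minimal (fun z ⟨hzΓ, hzE⟩ => ?_) isOpen_ball.isClosed_compl
  have hlength : ENNReal.ofReal s ≤ ENNReal.ofReal (Λ * dist z p) :=
    (hE.le_shorterArcLength_of_notMem hΓ hΓΛ hpE (ENNReal.ofReal_pos.2 hs).ne' ha.ge hb.ge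
      hzE).trans (hΓΛ.2 z hzΓ p (hE.1.1 hpE))
  rw [ENNReal.ofReal_le_ofReal_iff (by positivity)] at hlength
  rwa [mem_compl_iff, mem_ball, not_lt, div_le_iff₀' hΛ]

end ShorterArc

section LevelCurve

variable {U V A B : Set ℂ} {Φ Ψ : ℂ → ℂ} {z ζ : ℂ} {r s δ M : ℝ}

theorem ball_setDist_subset_compl (hζ : ζ ∈ B) : ball ζ (setDist A B) ⊆ Aᶜ := by
  intro z hz hzA
  have hbdd : BddBelow (image2 dist A B) := ⟨0, forall_mem_image2.2 fun _ _ _ _ => dist_nonneg⟩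
  exact (mem_ball.1 hz).not_ge (csInf_le hbdd (mem_image2_of_mem hzA hζ))

theorem IsExtConformal.exists_one_add_le_of_isBounded (hΦ : IsExtConformal U Φ) (hU : IsOpen U)
    (hU' : U ∈ cobounded ℂ) (hB : IsBounded B) :
    ∃ M > 0, ∀ δ, ∀ ζ ∈ levelCurve U Φ δ, ζ ∈ B → 1 + δ ≤ M := by
  obtain ⟨M, hM, hbound⟩ := (isBounded_image_inter_of_injOn (hΦ.eventually_differentiableAt hU hU')
    hΦ.tendsto_cobounded hU' hΦ.2.1.injOn hB).exists_pos_norm_le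
  exact ⟨M, hM, fun δ ζ hζ hζB => hζ.2 ▸ hbound _ (mem_image_of_mem Φ ⟨hζ.1, hζB⟩)⟩

theorem div_le_log_one_add (hδ : 0 ≤ δ) (hM : 1 + δ ≤ M) : δ / M ≤ Real.log (1 + δ) := calc
  δ / M ≤ δ / (1 + δ) := by gcongr
  _ = 1 - (1 + δ)⁻¹ := by field_simp; ring
  _ ≤ Real.log (1 + δ) := Real.one_sub_inv_le_log_of_pos (by linarith)

theorem IsExtConformal.log_norm_le_of_two_disks (hΨ : IsExtConformal V Ψ) (hV : IsOpen V)
    (hr : 0 < r) (hrs : r ≤ s) (hzζ : dist z ζ = s) (hζV : ball ζ s ⊆ V) (hzV : ball z r ⊆ V) :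
    r / (12 * s) * Real.log ‖Ψ ζ‖ ≤ Real.log ‖Ψ z‖ := by
  have hgt : ∀ w ∈ V, 1 < ‖Ψ w‖ := fun _ hw => hΨ.2.1.mapsTo hw
  exact harnack_inequality_two_disks
    (harmonicOnNhd_log_norm hV hΨ.1 fun w hw => norm_pos_iff.1 (one_pos.trans (hgt w hw)))
    (fun w hw => Real.log_pos (hgt w hw)) hr hrs hzζ hζV hzV

theorem exists_one_add_le_of_dist_le {Γ : Set ℂ} (hΓ : IsCompact Γ)
    (hΦ : IsExtConformal (unboundedComponent Γ) Φ) (R : ℝ) :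
    ∃ M > 0, ∀ δ, ∀ z ∈ Γ, ∀ ζ ∈ levelCurve (unboundedComponent Γ) Φ δ,
      dist z ζ ≤ R → 1 + δ ≤ M := by
  obtain ⟨M, hM, hbound⟩ := hΦ.exists_one_add_le_of_isBounded
    (isOpen_unboundedComponent hΓ.isClosed) (unboundedComponent_mem_cobounded hΓ.isBounded)
    (hΓ.isBounded.cthickening (δ := R))
  exact ⟨M, hM, fun δ z hz ζ hζ hzζ =>
    hbound δ ζ hζ (mem_cthickening_of_dist_le ζ z R Γ hz (dist_comm z ζ ▸ hzζ))⟩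

theorem div_le_log_norm_of_mem_levelCurve {Γ : Set ℂ} (hΓ : IsCompact Γ)
    (hΦ : IsExtConformal (unboundedComponent Γ) Φ) (hΨ : IsExtConformal Aᶜ Ψ) (hA : A ⊆ Γ)
    (hδ : 0 ≤ δ) (hM : 1 + δ ≤ M) (hζ : ζ ∈ levelCurve (unboundedComponent Γ) Φ δ) :
    δ / M ≤ Real.log ‖Ψ ζ‖ := by
  have hsub : unboundedComponent Γ ⊆ Aᶜ := fun z hz hzA => hz.1 (hA hzA)
  have hle : 1 + δ ≤ ‖Ψ ζ‖ := hζ.2 ▸ hΦ.norm_le_norm (isOpen_unboundedComponent hΓ.isClosed)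
    (unboundedComponent_mem_cobounded hΓ.isBounded) (hΨ.1.mono hsub)
    (hΨ.2.1.mapsTo.mono_left hsub) hΨ.tendsto_cobounded hζ.1
  exact (div_le_log_one_add hδ hM).trans (Real.log_le_log (by linarith) hle)

end LevelCurve

/-- (4.11p): there is `ε₁ = ε₁(Γ) > 0` with the following property.
Let `0 < s < diam Γ`, let `z_s ∈ Γ` and `ζ_s ∈ Γ_{δ(s)}` with `|z_s - ζ_s| = s = ρ_{δ(s)}(z_s)`,
let `E_s = Γ(z_s*, z_s**)` be the arc around `z_s` whose halves `Γ(z_s*,z_s)`, `Γ(z_s,z_s**)`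
both have length `s/2`, let `A_s` be the closure of `Γ ∖ E_s`, and let `Φ_s` be the normalized
conformal map of the complement `Ω_s` of `A_s` onto `𝔻*`. Then `|Φ_s(z_s)| ≥ exp(ε₁ δ(s))`. -/
theorem faber_map_lower_bound
    (Γ : Set ℂ) (Λ : ℝ) (hΓJ : IsJordanCurve Γ) (hΓq : IsQuasismooth Γ Λ)
    (Φ : ℂ → ℂ) (hΦ : IsExtConformal (unboundedComponent Γ) Φ) :
    ∃ ε₁ > (0:ℝ), ∀ (s δs : ℝ) (zs ζs zst zsst : ℂ) (Es : Set ℂ) (Φs : ℂ → ℂ),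
      0 < s → s < Metric.diam Γ →
      0 < δs → setDist Γ (levelCurve (unboundedComponent Γ) Φ δs) = s →
      zs ∈ Γ → ζs ∈ levelCurve (unboundedComponent Γ) Φ δs →
      dist zs ζs = s → rho (unboundedComponent Γ) Φ δs zs = s →
      zst ∈ Γ → zsst ∈ Γ → IsShorterArc Γ zst zsst Es → zs ∈ Es →
      shorterArcLength Γ zst zs = ENNReal.ofReal (s/2) →
      shorterArcLength Γ zs zsst = ENNReal.ofReal (s/2) →
      IsExtConformal (closure (Γ \ Es))ᶜ Φs →
      Real.exp (ε₁ * δs) ≤ ‖Φs zs‖ := by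
  have hΛ : 1 ≤ Λ := hΓq.1
  have hΓ : IsCompact Γ := hΓJ.isCompact
  obtain ⟨M, hM, hbound⟩ := exists_one_add_le_of_dist_le hΓ hΦ (Metric.diam Γ)
  refine ⟨1 / (24 * Λ * M), by positivity, ?_⟩
  intro s δs zs ζs zst zsst Es Φs hs hsdiam hδ hdist hzs hζs hzζ _ _ _ hEs hzsE hlen₁ hlen₂ hΦs
  have hsub : closure (Γ \ Es) ⊆ Γ := closure_minimal sdiff_subset hΓ.isClosed
  have hballζ : ball ζs s ⊆ (closure (Γ \ Es))ᶜ :=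
    hdist ▸ (ball_setDist_subset_compl hζs).trans (compl_subset_compl.2 hsub)
  have hballz : ball zs (s / 2 / Λ) ⊆ (closure (Γ \ Es))ᶜ :=
    hEs.ball_subset_compl_closure hΓJ hΓq hzsE (half_pos hs) hlen₁ hlen₂
  have hlogζ : δs / M ≤ Real.log ‖Φs ζs‖ := div_le_log_norm_of_mem_levelCurve hΓ hΦ hΦs hsub hδ.le
    (hbound δs zs hzs ζs hζs (hzζ.trans_le hsdiam.le)) hζs
  have hharnack : s / 2 / Λ / (12 * s) * Real.log ‖Φs ζs‖ ≤ Real.log ‖Φs zs‖ :=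
    hΦs.log_norm_le_of_two_disks isClosed_closure.isOpen_compl (by positivity)
      ((div_le_self (by positivity) hΛ).trans (half_le_self hs.le)) hzζ hballζ hballz
  have hgt : 1 < ‖Φs zs‖ := hΦs.2.1.mapsTo (hballz (mem_ball_self (by positivity)))
  rw [← Real.le_log_iff_exp_le (one_pos.trans hgt)]
  calc 1 / (24 * Λ * M) * δs = s / 2 / Λ / (12 * s) * (δs / M) := by field_simp; norm_num
    _ ≤ s / 2 / Λ / (12 * s) * Real.log ‖Φs ζs‖ := by gcongr
    _ ≤ Real.log ‖Φs zs‖ := hharnack
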